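/- arXiv:math/0501179 — 2 statements merged into one kernel-verified Lean document; each statement's English description precedes it below -/
import Mathlib

section
/- Let M be an acyclic matching on the graph G(C•) of the chain complex C•. Then the Morse complex C•^M is a chain complex of free R-modules (i.e. ∂^M ∘ ∂^M = 0) which is chain homotopy equivalent to C•; in particular H_i(C•) ≅ H_i(C•^M) for all i ≥ 0. -/
/-!
Algebraic Discrete Morse theory (Jöllenbeck–Welker).

Setup: `R` is a (possibly noncommutative) ring and `C` is a chain complex of free
left `R`-modules `C i = X i → R` with fixed finite basis `X i` in homological
degree `i`; the differential is `∂ i (c) = ∑ c', d i c c' • c'` (we record only the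
matrix of coefficients `d`).  `M` is a matching on the associated weighted directed
graph, `MStep` describes the edges of the modified graph `G_M`, `MPath` the directed
paths, `Gamma v w` the sum of the weights of all paths from `v` to `w`, `Crit` the
critical basis elements, `DMmap` the Morse differential, and `fmap`, `gmap`, `chimap`
the comparison maps and the homotopy.
-/

attribute [local instance] Classical.propDecidable

noncomputable section

section ADMT

variable {R : Type} [Ring R]
variable (X : ℕ → Type) [∀ i, Fintype (X i)]
variable (d : ∀ i, X (i + 1) → X i → R)
variable (M : ∀ i, Set (X (i + 1) × X i))

/-- The family of coefficients `d` of the differentials satisfies `∂ ∘ ∂ = 0`,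
i.e. `C` is a chain complex. -/
def IsComplexAux : Prop :=
  ∀ (i : ℕ) (c : X (i + 2)) (c'' : X i),
    ∑ c' : X (i + 1), d (i + 1) c c' * d i c' c'' = 0

/-- The edges of the modified graph `G_M`: downward steps along non-matched edges
of the graph `G(C)` (weight `d i c c'`), and upward reversed steps along matched
edges (weight `-(d i c c')⁻¹`). -/
inductive MStep : (Σ i, X i) → (Σ i, X i) → Prop
  | down (i : ℕ) (c : X (i + 1)) (c' : X i) (hne : d i c c' ≠ 0)
      (hnm : (c, c') ∉ M i) : MStep ⟨i + 1, c⟩ ⟨i, c'⟩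
  | up (i : ℕ) (c : X (i + 1)) (c' : X i) (hmem : (c, c') ∈ M i) :
      MStep ⟨i, c'⟩ ⟨i + 1, c⟩

/-- `M` is an acyclic matching: all edges of `M` are edges of the graph `G(C)`,
every vertex lies in at most one edge of `M`, the weights of matched edges are
central units of `R`, and the modified graph `G_M` has no directed cycle. -/
def IsAcyclicMatching : Prop :=
  (∀ (i : ℕ) (c : X (i + 1)) (c' : X i), (c, c') ∈ M i → d i c c' ≠ 0) ∧
  (∀ (i : ℕ) (c : X (i + 1)) (c₁ c₂ : X i), (c, c₁) ∈ M i → (c, c₂) ∈ M i → c₁ = c₂) ∧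
  (∀ (i : ℕ) (c₁ c₂ : X (i + 1)) (c' : X i), (c₁, c') ∈ M i → (c₂, c') ∈ M i → c₁ = c₂) ∧
  (∀ (i : ℕ) (a : X (i + 2)) (b : X (i + 1)) (c : X i),
      (a, b) ∈ M (i + 1) → (b, c) ∈ M i → False) ∧
  (∀ (i : ℕ) (c : X (i + 1)) (c' : X i), (c, c') ∈ M i →
      d i c c' ∈ Set.center R ∧ IsUnit (d i c c')) ∧
  (∀ v : Σ i, X i, ¬ Relation.TransGen (MStep X d M) v v)

/-- Directed paths in the modified graph `G_M`. -/
inductive MPath : (Σ i, X i) → (Σ i, X i) → Type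
  | nil (v : Σ i, X i) : MPath v v
  | down (i : ℕ) (c : X (i + 1)) (c' : X i) (hne : d i c c' ≠ 0)
      (hnm : (c, c') ∉ M i) (w : Σ i, X i) (p : MPath ⟨i, c'⟩ w) :
      MPath ⟨i + 1, c⟩ w
  | up (i : ℕ) (c : X (i + 1)) (c' : X i) (hmem : (c, c') ∈ M i)
      (w : Σ i, X i) (p : MPath ⟨i + 1, c⟩ w) : MPath ⟨i, c'⟩ w

/-- The weight of a path: the product of the weights of its edges.  A non-matched
edge `c → c'` has weight `d i c c'`; a reversed matched edge has weight
`-(d i c c')⁻¹`. -/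
def MPath.weight : ∀ {v w : Σ i, X i}, MPath X d M v w → R
  | _, _, .nil _ => 1
  | _, _, .down i c c' _ _ _ p => d i c c' * MPath.weight p
  | _, _, .up i c c' _ _ p => -(Ring.inverse (d i c c')) * MPath.weight p

/-- The first step of the path decreases the homological degree. -/
def MPath.firstDown : ∀ {v w : Σ i, X i}, MPath X d M v w → Prop
  | _, _, .nil _ => False
  | _, _, .down _ _ _ _ _ _ _ => True
  | _, _, .up _ _ _ _ _ _ => False

/-- The first step of the path increases the homological degree. -/
def MPath.firstUp : ∀ {v w : Σ i, X i}, MPath X d M v w → Prop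
  | _, _, .nil _ => False
  | _, _, .down _ _ _ _ _ _ _ => False
  | _, _, .up _ _ _ _ _ _ => True

/-- `Γ(v,w)`: the sum of the weights of all directed paths from `v` to `w` in `G_M`
(under the acyclicity hypothesis there are only finitely many such paths). -/
def Gamma (v w : Σ i, X i) : R := ∑ᶠ p : MPath X d M v w, MPath.weight X d M p

/-- `Γ↓(v,w)`: the sum of the weights of all paths from `v` to `w` whose first step
decreases the homological degree. -/
def GammaDown (v w : Σ i, X i) : R :=
  ∑ᶠ (p : MPath X d M v w) (_ : MPath.firstDown X d M p), MPath.weight X d M p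

/-- `Γ↑(v,w)`: the sum of the weights of all paths from `v` to `w` whose first step
increases the homological degree. -/
def GammaUp (v w : Σ i, X i) : R :=
  ∑ᶠ (p : MPath X d M v w) (_ : MPath.firstUp X d M p), MPath.weight X d M p

/-- A basis element is critical if it lies in no edge of `M`. -/
def CriticalV (v : Σ i, X i) : Prop :=
  ∀ (j : ℕ) (a : X (j + 1)) (b : X j), (a, b) ∈ M j →
    v ≠ ⟨j + 1, a⟩ ∧ v ≠ ⟨j, b⟩

/-- The critical basis elements of homological degree `i`. -/
abbrev Crit (i : ℕ) := {c : X i // CriticalV X M ⟨i, c⟩}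

/-- The `R`-linear map between free left `R`-modules determined by a matrix of
coefficients. -/
def liftMap {α β : Type} [Fintype α] (w : α → β → R) :
    (α → R) →ₗ[R] (β → R) where
  toFun v b := ∑ a, v a * w a b
  map_add' u v := by
    funext b
    simp [add_mul, Finset.sum_add_distrib]
  map_smul' r v := by
    funext b
    simp [Finset.mul_sum, mul_assoc]

/-- The differential `∂` of the original complex `C`. -/
def Dmap (i : ℕ) : (X (i + 1) → R) →ₗ[R] (X i → R) :=
  liftMap (fun c c' => d i c c')

/-- The Morse differential `∂^M (c) = ∑ Γ(c,c') • c'` on the critical cells. -/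
def DMmap (i : ℕ) : (Crit X M (i + 1) → R) →ₗ[R] (Crit X M i → R) :=
  liftMap (fun c c' => Gamma X d M ⟨i + 1, c.1⟩ ⟨i, c'.1⟩)

/-- The comparison map `f : C → C^M`, `f(c) = ∑ Γ(c,c') • c'`. -/
def fmap (i : ℕ) : (X i → R) →ₗ[R] (Crit X M i → R) :=
  liftMap (fun c c' => Gamma X d M ⟨i, c⟩ ⟨i, c'.1⟩)

/-- The comparison map `g : C^M → C`, `g(c) = ∑ Γ(c,c') • c'`. -/
def gmap (i : ℕ) : (Crit X M i → R) →ₗ[R] (X i → R) :=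
  liftMap (fun c c' => Gamma X d M ⟨i, c.1⟩ ⟨i, c'⟩)

/-- The homotopy `χ : C_i → C_{i+1}`, `χ(c) = ∑ Γ(c,c') • c'`. -/
def chimap (i : ℕ) : (X i → R) →ₗ[R] (X (i + 1) → R) :=
  liftMap (fun c c' => Gamma X d M ⟨i, c⟩ ⟨i + 1, c'⟩)

/-!
On the free module on all cells, the edge weights of `G_M` form an operator `T`. It is locally
nilpotent by acyclicity, so the path sums `Γ` are the coefficients of `(1 - T)⁻¹`; this gives two
recursions, `Γ = 1 + ΓT` for the first step of a path and `Γ = 1 + TΓ` for its last step. Let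
`Γ k` collect the paths raising the degree by `k`; a path gains at most one degree, so `Γ k = 0`
for `k ≥ 2`. The differential is `D` with matched part `U`, and `W` inverts `U` along the matching,
so that `π = 1 - UW - WU` is the projection onto the critical cells. Splitting the recursions by
degree yields `π Γ 0 = π (1 + D Γ 1)` and `Γ 0 π = (1 + Γ 1 D) π`, and `1 + Γ 1 D` kills `W` from
the left, `1 + D Γ 1` from the right. Hence `Γ 0 π Γ 0 = (1 + Γ 1 D)(1 + D Γ 1)`, which is
`1 + D Γ 1 + Γ 1 D`; the remaining identities follow in the same way in the ring of endomorphisms.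
-/

section MatchingPair

variable {A : Type*} [Ring A] {D U W : A} {Γ : ℤ → A}

/-- The ring-theoretic content of a matching: `U` is the matched part of the differential and `W`
inverts it on the matched basis elements. -/
structure IsMatchingPair (U W : A) : Prop where
  matched_mul_matched : U * U = 0
  inv_mul_inv : W * W = 0
  matched_mul_inv_mul_matched : U * W * U = U
  inv_mul_matched_mul_inv : W * U * W = W

/-- The idempotent complementary to a matching pair: the projection onto the critical basis
elements. -/
def criticalIdempotent (U W : A) : A := 1 - U * W - W * U

local notation:max "π" => criticalIdempotent U W

namespace IsMatchingPair

variable (h : IsMatchingPair U W)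
include h

theorem criticalIdempotent_mul_matched : π * U = 0 := by
  rw [criticalIdempotent, sub_mul, sub_mul, h.matched_mul_inv_mul_matched, mul_assoc W,
    h.matched_mul_matched]
  simp

theorem criticalIdempotent_mul_inv : π * W = 0 := by
  rw [criticalIdempotent, sub_mul, sub_mul, h.inv_mul_matched_mul_inv, mul_assoc U, h.inv_mul_inv]
  simp

theorem matched_mul_criticalIdempotent : U * π = 0 := by
  rw [criticalIdempotent, mul_sub, mul_sub, ← mul_assoc, ← mul_assoc, h.matched_mul_matched,
    h.matched_mul_inv_mul_matched]
  simp

theorem inv_mul_criticalIdempotent : W * π = 0 := by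
  rw [criticalIdempotent, mul_sub, mul_sub, ← mul_assoc, ← mul_assoc, h.inv_mul_inv,
    h.inv_mul_matched_mul_inv]
  simp

theorem isIdempotentElem_criticalIdempotent : IsIdempotentElem π := by
  rw [IsIdempotentElem]
  nth_rw 2 [criticalIdempotent]
  rw [mul_sub, mul_sub, ← mul_assoc, ← mul_assoc, h.criticalIdempotent_mul_matched,
    h.criticalIdempotent_mul_inv]
  simp

end IsMatchingPair

/-- The recursions satisfied by the path sums of the graph obtained from a differential `D` by
reversing the edges of its matched part `U`: unmatched edges carry the weights of `D - U`, reversed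
edges those of `-W`, and `Γ k` collects the paths that raise the degree by `k`. Products are
compositions, so the first edge of a path is the rightmost factor. In lemma names, `projection` is
`π * Γ 0`, `inclusion` is `Γ 0 * π` and `morse`, the Morse differential, is `π * Γ (-1) * π`. -/
structure IsPathSum (D U W : A) (Γ : ℤ → A) : Prop extends IsMatchingPair U W where
  first_step (k : ℤ) : Γ k = (if k = 0 then 1 else 0) + Γ (k + 1) * (D - U) - Γ (k - 1) * W
  last_step (k : ℤ) : Γ k = (if k = 0 then 1 else 0) + (D - U) * Γ (k + 1) - W * Γ (k - 1)
  gamma_two : Γ 2 = 0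

namespace IsPathSum

variable (h : IsPathSum D U W Γ)
include h

theorem gamma_one_eq_neg_gamma_zero_mul_inv : Γ 1 = -(Γ 0 * W) := by
  simpa [h.gamma_two] using h.first_step 1

theorem gamma_one_eq_neg_inv_mul_gamma_zero : Γ 1 = -(W * Γ 0) := by
  simpa [h.gamma_two] using h.last_step 1

theorem gamma_zero_eq_first_step : Γ 0 = 1 + Γ 1 * (D - U) - Γ (-1) * W := by
  simpa using h.first_step 0

theorem gamma_zero_eq_last_step : Γ 0 = 1 + (D - U) * Γ 1 - W * Γ (-1) := by
  simpa using h.last_step 0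

theorem gamma_one_mul_matched_mul_inv : Γ 1 * U * W = Γ 1 := by
  rw [h.gamma_one_eq_neg_gamma_zero_mul_inv, neg_mul, neg_mul, mul_assoc, mul_assoc, ← mul_assoc W,
    h.inv_mul_matched_mul_inv]

theorem inv_mul_matched_mul_gamma_one : W * U * Γ 1 = Γ 1 := by
  rw [h.gamma_one_eq_neg_inv_mul_gamma_zero, mul_neg, ← mul_assoc, h.inv_mul_matched_mul_inv]

theorem gamma_one_mul_gamma_one : Γ 1 * Γ 1 = 0 := by
  nth_rw 1 [h.gamma_one_eq_neg_gamma_zero_mul_inv]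
  rw [h.gamma_one_eq_neg_inv_mul_gamma_zero, neg_mul_neg, mul_assoc, ← mul_assoc W,
    h.inv_mul_inv, zero_mul, mul_zero]

theorem gamma_one_mul_differential_mul_inv : Γ 1 * D * W = -W := by
  linear_combination (norm := noncomm_ring) -h.gamma_zero_eq_first_step * W + Γ (-1) * h.inv_mul_inv
    + h.gamma_one_mul_matched_mul_inv + h.gamma_one_eq_neg_gamma_zero_mul_inv

theorem inv_mul_differential_mul_gamma_one : W * D * Γ 1 = -W := by
  linear_combination (norm := noncomm_ring) -W * h.gamma_zero_eq_last_step + h.inv_mul_inv * Γ (-1)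
    + h.inv_mul_matched_mul_gamma_one + h.gamma_one_eq_neg_inv_mul_gamma_zero

theorem criticalIdempotent_mul_gamma_zero : π * Γ 0 = π * (1 + D * Γ 1) := by
  linear_combination (norm := noncomm_ring) π * h.gamma_zero_eq_last_step
    - h.criticalIdempotent_mul_matched * Γ 1 - h.criticalIdempotent_mul_inv * Γ (-1)

theorem gamma_zero_mul_criticalIdempotent : Γ 0 * π = (1 + Γ 1 * D) * π := by
  linear_combination (norm := noncomm_ring) h.gamma_zero_eq_first_step * π
    - Γ 1 * h.matched_mul_criticalIdempotent - Γ (-1) * h.inv_mul_criticalIdempotent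

theorem criticalIdempotent_mul_gamma_one : π * Γ 1 = 0 := by
  rw [h.gamma_one_eq_neg_inv_mul_gamma_zero, mul_neg, ← mul_assoc, h.criticalIdempotent_mul_inv]
  simp

theorem gamma_one_mul_criticalIdempotent : Γ 1 * π = 0 := by
  rw [h.gamma_one_eq_neg_gamma_zero_mul_inv, neg_mul, mul_assoc, h.inv_mul_criticalIdempotent]
  simp

theorem gamma_neg_one_mul_criticalIdempotent : Γ (-1) * π = Γ 0 * D * π := by
  have neg_one_eq : Γ (-1) = Γ 0 * (D - U) - Γ (-2) * W := by simpa using h.first_step (-1)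
  linear_combination (norm := noncomm_ring) neg_one_eq * π
    - Γ 0 * h.matched_mul_criticalIdempotent - Γ (-2) * h.inv_mul_criticalIdempotent

theorem projection_mul_inclusion : (π * Γ 0) * (Γ 0 * π) = π := by
  rw [h.criticalIdempotent_mul_gamma_zero, h.gamma_zero_mul_criticalIdempotent]
  linear_combination (norm := noncomm_ring) h.isIdempotentElem_criticalIdempotent.eq
    + π * D * h.gamma_one_mul_criticalIdempotent
    + h.criticalIdempotent_mul_gamma_one * D * π
    + π * D * h.gamma_one_mul_gamma_one * D * π

theorem morse_eq_projection_mul : π * Γ (-1) * π = (π * Γ 0) * D * π := by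
  rw [mul_assoc, h.gamma_neg_one_mul_criticalIdempotent, ← mul_assoc, ← mul_assoc]

theorem morse_eq_mul_inclusion : π * Γ (-1) * π = π * D * (Γ 0 * π) := by
  rw [h.morse_eq_projection_mul, h.criticalIdempotent_mul_gamma_zero,
    h.gamma_zero_mul_criticalIdempotent]
  noncomm_ring

variable (hD : D * D = 0)
include hD

theorem inclusion_mul_projection : (Γ 0 * π) * (π * Γ 0) = 1 + (D * Γ 1 + Γ 1 * D) := by
  have left_mul_inv : (1 + Γ 1 * D) * W = 0 := by
    rw [add_mul, one_mul, h.gamma_one_mul_differential_mul_inv, add_neg_cancel]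
  have inv_mul_right : W * (1 + D * Γ 1) = 0 := by
    rw [mul_add, mul_one, ← mul_assoc, h.inv_mul_differential_mul_gamma_one, add_neg_cancel]
  calc
    _ = (1 + Γ 1 * D) * π * (1 + D * Γ 1) := by
      rw [mul_assoc, ← mul_assoc π, h.isIdempotentElem_criticalIdempotent.eq,
        h.criticalIdempotent_mul_gamma_zero, ← mul_assoc, h.gamma_zero_mul_criticalIdempotent]
    _ = (1 + Γ 1 * D) * (1 + D * Γ 1) := by
      rw [criticalIdempotent]
      linear_combination (norm := noncomm_ring) -(1 + Γ 1 * D) * U * inv_mul_right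
        - left_mul_inv * U * (1 + D * Γ 1)
    _ = 1 + (D * Γ 1 + Γ 1 * D) := by
      linear_combination (norm := noncomm_ring) Γ 1 * hD * Γ 1

theorem morse_mul_projection : (π * Γ (-1) * π) * (π * Γ 0) = (π * Γ 0) * D := by
  rw [h.morse_eq_mul_inclusion, mul_assoc, h.inclusion_mul_projection hD,
    h.criticalIdempotent_mul_gamma_zero]
  linear_combination (norm := noncomm_ring) π * hD * Γ 1

theorem differential_mul_inclusion : D * (Γ 0 * π) = (Γ 0 * π) * (π * Γ (-1) * π) := by
  rw [h.morse_eq_projection_mul, mul_assoc _ D, ← mul_assoc _ _ (D * _),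
    h.inclusion_mul_projection hD, h.gamma_zero_mul_criticalIdempotent]
  linear_combination (norm := noncomm_ring) -Γ 1 * hD * π

theorem morse_mul_morse : (π * Γ (-1) * π) * (π * Γ (-1) * π) = 0 := by
  nth_rw 2 [h.morse_eq_projection_mul]
  rw [← mul_assoc, ← mul_assoc, h.morse_mul_projection hD, mul_assoc _ D D, hD]
  simp

end IsPathSum

end MatchingPair

section HomogeneousPart

variable {S V : Type*} [Ring S] {deg : V → ℤ} {b k : ℤ} {A B : Module.End S (V →₀ S)}

theorem finsuppEnd_ext (h : ∀ v w, A (Finsupp.single v 1) w = B (Finsupp.single v 1) w) :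
    A = B := by
  ext v w
  exact h v w

theorem mul_apply_single_apply (A B : Module.End S (V →₀ S)) (v w : V) :
    (A * B) (Finsupp.single v 1) w =
      (B (Finsupp.single v 1)).sum fun u r => r * A (Finsupp.single u 1) w := by
  rw [Module.End.mul_apply]
  nth_rw 1 [← Finsupp.sum_single (B (Finsupp.single v 1))]
  simp only [map_finsuppSum, Finsupp.sum_apply]
  refine Finsupp.sum_congr fun u _ => ?_
  rw [← Finsupp.smul_single_one, map_smul, Finsupp.smul_apply, smul_eq_mul]

/-- The operator `B` sends each basis element to a combination of basis elements whose degree is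
larger by `b`. -/
def IsHomogeneousOfDegree (deg : V → ℤ) (b : ℤ) (B : Module.End S (V →₀ S)) : Prop :=
  ∀ v w, deg w ≠ deg v + b → B (Finsupp.single v 1) w = 0

/-- The component of an operator that raises the degree of basis elements by `k`. -/
def homogeneousPart (deg : V → ℤ) (k : ℤ) :
    Module.End S (V →₀ S) →+ Module.End S (V →₀ S) where
  toFun A := Finsupp.linearCombination S fun v =>
    (A (Finsupp.single v 1)).filter fun w => deg w = deg v + k
  map_zero' := by
    ext
    simp [Finsupp.filter_zero]
  map_add' A B := by
    ext
    simp [Finsupp.filter_add]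

theorem homogeneousPart_single_apply (A : Module.End S (V →₀ S)) (v w : V) :
    homogeneousPart deg k A (Finsupp.single v 1) w =
      if deg w = deg v + k then A (Finsupp.single v 1) w else 0 := by
  simp [homogeneousPart, Finsupp.filter_apply]

theorem homogeneousPart_one :
    homogeneousPart deg k (1 : Module.End S (V →₀ S)) = if k = 0 then 1 else 0 := by
  refine finsuppEnd_ext fun v w => ?_
  rw [homogeneousPart_single_apply, Module.End.one_apply]
  rcases eq_or_ne v w with rfl | hvw
  · by_cases hk : k = 0 <;> simp [hk]
  · by_cases hk : k = 0 <;> simp [hk, hvw]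

theorem IsHomogeneousOfDegree.homogeneousPart_mul_right (hB : IsHomogeneousOfDegree deg b B) :
    homogeneousPart deg k (A * B) = homogeneousPart deg (k - b) A * B := by
  refine finsuppEnd_ext fun v w => ?_
  simp only [homogeneousPart_single_apply, mul_apply_single_apply, Finsupp.sum, mul_ite, mul_zero]
  have degree_iff : ∀ u ∈ (B (Finsupp.single v 1)).support,
      deg w = deg u + (k - b) ↔ deg w = deg v + k := by
    intro u hu
    have : deg u = deg v + b := not_imp_comm.1 (hB v u) (Finsupp.mem_support_iff.1 hu)
    lia
  rw [Finset.sum_congr rfl fun u hu => if_congr (degree_iff u hu) rfl rfl]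
  split_ifs <;> simp

theorem IsHomogeneousOfDegree.homogeneousPart_mul_left (hB : IsHomogeneousOfDegree deg b B) :
    homogeneousPart deg k (B * A) = B * homogeneousPart deg (k - b) A := by
  refine finsuppEnd_ext fun v w => ?_
  have support_subset : (homogeneousPart deg (k - b) A (Finsupp.single v 1)).support ⊆
      (A (Finsupp.single v 1)).support := by
    intro u
    simp only [Finsupp.mem_support_iff, homogeneousPart_single_apply]
    exact mt fun h => by rw [h, ite_self]
  rw [homogeneousPart_single_apply, mul_apply_single_apply, mul_apply_single_apply,
    Finsupp.sum_of_support_subset _ support_subset _ (by simp), Finsupp.sum]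
  simp only [homogeneousPart_single_apply, ite_mul, zero_mul]
  have term_eq : ∀ u, (if deg u = deg v + (k - b) then
        A (Finsupp.single v 1) u * B (Finsupp.single u 1) w else 0) =
      if deg w = deg v + k then A (Finsupp.single v 1) u * B (Finsupp.single u 1) w else 0 := by
    intro u
    by_cases hw : deg w = deg u + b
    · exact if_congr (by lia) rfl rfl
    · simp [hB u w hw]
  rw [Finset.sum_congr rfl fun u _ => term_eq u]
  split_ifs <;> simp

end HomogeneousPart

section MatchingOperator

variable {S V : Type*} [Ring S] {m : V → V → Prop} {g g' : V → V → S} {v w : V}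

/-- A matching on the vertices of a directed graph: every vertex lies in at most one of the edges
selected by `m`. -/
structure IsMatching (m : V → V → Prop) : Prop where
  rightUnique : Relator.RightUnique m
  leftUnique : Relator.LeftUnique m
  not_consecutive : ∀ {t u v}, m t u → ¬ m u v

theorem IsMatching.flip (h : IsMatching m) : IsMatching (flip m) where
  rightUnique _ _ _ h₁ h₂ := h.leftUnique h₁ h₂
  leftUnique _ _ _ h₁ h₂ := h.rightUnique h₁ h₂
  not_consecutive h₁ h₂ := h.not_consecutive h₂ h₁

/-- The operator sending `v` to `g v w • w` if `v` is related to `w`, and to `0` if `v` is related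
to nothing. -/
def matchingOperator (m : V → V → Prop) (g : V → V → S) : Module.End S (V →₀ S) :=
  Finsupp.linearCombination S fun v =>
    if h : ∃ w, m v w then Finsupp.single h.choose (g v h.choose) else 0

theorem matchingOperator_single_of_forall_not (h : ∀ w, ¬ m v w) (r : S) :
    matchingOperator m g (Finsupp.single v r) = 0 := by
  simp [matchingOperator, h]

theorem matchingOperator_single_of_rel (hm : Relator.RightUnique m) (h : m v w) (r : S) :
    matchingOperator m g (Finsupp.single v r) = Finsupp.single w (r * g v w) := by
  have hex : ∃ w, m v w := ⟨w, h⟩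
  rw [matchingOperator, Finsupp.linearCombination_single, dif_pos hex, hm hex.choose_spec h,
    Finsupp.smul_single, smul_eq_mul]

theorem matchingOperator_single_apply (hm : Relator.RightUnique m) :
    matchingOperator m g (Finsupp.single v 1) w = if m v w then g v w else 0 := by
  by_cases hex : ∃ u, m v u
  · obtain ⟨u, hu⟩ := hex
    rw [matchingOperator_single_of_rel hm hu, one_mul]
    by_cases huw : u = w
    · subst huw
      simp [hu]
    · rw [if_neg fun hw => huw (hm hu hw), Finsupp.single_eq_of_ne' huw]
  · rw [matchingOperator_single_of_forall_not (not_exists.1 hex), if_neg (not_exists.1 hex w),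
      Finsupp.zero_apply]

theorem IsMatching.matchingOperator_mul_matchingOperator (h : IsMatching m) :
    matchingOperator m g * matchingOperator m g' = 0 := by
  refine Finsupp.lhom_ext fun v r => ?_
  by_cases hex : ∃ u, m v u
  · obtain ⟨u, hu⟩ := hex
    rw [Module.End.mul_apply, matchingOperator_single_of_rel h.rightUnique hu,
      matchingOperator_single_of_forall_not fun _ => h.not_consecutive hu, LinearMap.zero_apply]
  · rw [Module.End.mul_apply, matchingOperator_single_of_forall_not (not_exists.1 hex), map_zero,
      LinearMap.zero_apply]

theorem IsMatching.flip_mul_matchingOperator_single (h : IsMatching m) (hvw : m v w)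
    (hg : g v w * g' w v = 1) (r : S) :
    (matchingOperator (_root_.flip m) g' * matchingOperator m g) (Finsupp.single v r) =
      Finsupp.single v r := by
  rw [Module.End.mul_apply, matchingOperator_single_of_rel h.rightUnique hvw,
    matchingOperator_single_of_rel h.flip.rightUnique hvw, mul_assoc, hg, mul_one]

theorem flip_mul_matchingOperator_single_of_forall_not (h : ∀ w, ¬ m v w) (r : S) :
    (matchingOperator (flip m) g' * matchingOperator m g) (Finsupp.single v r) = 0 := by
  rw [Module.End.mul_apply, matchingOperator_single_of_forall_not h, map_zero]

theorem IsMatching.matchingOperator_mul_flip_mul_matchingOperator (h : IsMatching m)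
    (hg : ∀ v w, m v w → g v w * g' w v = 1) :
    matchingOperator m g * matchingOperator (_root_.flip m) g' * matchingOperator m g =
      matchingOperator m g := by
  refine Finsupp.lhom_ext fun v r => ?_
  rw [mul_assoc, Module.End.mul_apply]
  by_cases hex : ∃ w, m v w
  · obtain ⟨w, hw⟩ := hex
    rw [h.flip_mul_matchingOperator_single hw (hg v w hw)]
  · rw [flip_mul_matchingOperator_single_of_forall_not (not_exists.1 hex), map_zero,
      matchingOperator_single_of_forall_not (not_exists.1 hex)]

theorem IsMatching.isMatchingPair (h : IsMatching m)
    (hg : ∀ v w, m v w → g v w * g' w v = 1) (hg' : ∀ v w, m v w → g' w v * g v w = 1) :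
    IsMatchingPair (matchingOperator m g) (matchingOperator (_root_.flip m) g') where
  matched_mul_matched := h.matchingOperator_mul_matchingOperator
  inv_mul_inv := h.flip.matchingOperator_mul_matchingOperator
  matched_mul_inv_mul_matched := h.matchingOperator_mul_flip_mul_matchingOperator hg
  inv_mul_matched_mul_inv :=
    h.flip.matchingOperator_mul_flip_mul_matchingOperator fun v w => hg' w v

/-- A vertex is unmatched if it lies in none of the edges selected by `m`. -/
def IsUnmatched (m : V → V → Prop) (v : V) : Prop := ∀ w, ¬ m v w ∧ ¬ m w v

theorem IsMatching.criticalIdempotent_single (h : IsMatching m)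
    (hg : ∀ v w, m v w → g v w * g' w v = 1) (hg' : ∀ v w, m v w → g' w v * g v w = 1) (r : S) :
    criticalIdempotent (matchingOperator m g) (matchingOperator (_root_.flip m) g')
      (Finsupp.single v r) = if IsUnmatched m v then Finsupp.single v r else 0 := by
  have fixed_of_bottom {w} := h.flip.flip_mul_matchingOperator_single (v := v) (w := w) (r := r)
    (g := g') (g' := g)
  have zero_of_not_bottom := flip_mul_matchingOperator_single_of_forall_not
    (m := _root_.flip m) (v := v) (r := r) (g := g') (g' := g)
  simp only [flip_flip] at fixed_of_bottom zero_of_not_bottom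
  rw [criticalIdempotent, LinearMap.sub_apply, LinearMap.sub_apply, Module.End.one_apply]
  by_cases top : ∃ w, m v w
  · obtain ⟨w, hw⟩ := top
    rw [h.flip_mul_matchingOperator_single hw (hg v w hw),
      zero_of_not_bottom fun u huv => h.not_consecutive huv hw,
      if_neg fun unmatched => (unmatched w).1 hw, sub_zero, sub_self]
  · rw [flip_mul_matchingOperator_single_of_forall_not (not_exists.1 top), sub_zero]
    by_cases bottom : ∃ w, m w v
    · obtain ⟨w, hw⟩ := bottom
      rw [fixed_of_bottom hw (hg' w v hw), if_neg fun unmatched => (unmatched w).2 hw, sub_self]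
    · rw [zero_of_not_bottom (not_exists.1 bottom), sub_zero,
        if_pos (show IsUnmatched m v from fun w => ⟨not_exists.1 top w, not_exists.1 bottom w⟩)]

end MatchingOperator

theorem acc_of_finite_of_acyclic {α : Type*} {r : α → α → Prop} {a : α}
    (acyclic : ∀ b, ¬ Relation.TransGen r b b) (finite : {b | Relation.ReflTransGen r b a}.Finite) :
    Acc r a := by
  have : IsStrictOrder α (Relation.TransGen r) := { irrefl := acyclic }
  exact (Set.WellFoundedOn.acc_iff_wellFoundedOn.out 0 1).2 <|
    (finite.wellFoundedOn (r := Relation.TransGen r)).mono' fun _ _ _ _ => Relation.TransGen.single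

section Cells

variable {X d M}

/-- The matching `M` as a relation between cells of arbitrary degrees, from top to bottom. -/
inductive IsMatched (M : ∀ i, Set (X (i + 1) × X i)) : (Σ i, X i) → (Σ i, X i) → Prop
  | mk {i : ℕ} {c : X (i + 1)} {c' : X i} (h : (c, c') ∈ M i) : IsMatched M ⟨i + 1, c⟩ ⟨i, c'⟩

omit [∀ i, Fintype (X i)]

theorem isMatched_mk_iff {i : ℕ} {c : X (i + 1)} {c' : X i} :
    IsMatched M ⟨i + 1, c⟩ ⟨i, c'⟩ ↔ (c, c') ∈ M i :=
  ⟨fun h => by cases h; assumption, .mk⟩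

theorem IsMatched.degree_eq {v w : Σ i, X i} (h : IsMatched M v w) : v.1 = w.1 + 1 := by
  cases h
  rfl

theorem criticalV_iff_isUnmatched {v : Σ i, X i} :
    CriticalV X M v ↔ IsUnmatched (IsMatched M) v := by
  constructor
  · rintro hv w
    constructor <;> rintro ⟨h⟩
    exacts [(hv _ _ _ h).1 rfl, (hv _ _ _ h).2 rfl]
  · rintro hv j a b h
    constructor <;> rintro rfl
    exacts [(hv _).1 ⟨h⟩, (hv _).2 ⟨h⟩]

variable (X d M) in
/-- An acyclic matching whose matched edges carry units of `R`, central or not. -/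
structure IsAcyclicUnitMatching : Prop where
  bottom_unique : ∀ {i : ℕ} {c : X (i + 1)} {c₁ c₂ : X i},
    (c, c₁) ∈ M i → (c, c₂) ∈ M i → c₁ = c₂
  top_unique : ∀ {i : ℕ} {c₁ c₂ : X (i + 1)} {c' : X i},
    (c₁, c') ∈ M i → (c₂, c') ∈ M i → c₁ = c₂
  not_consecutive : ∀ {i : ℕ} {a : X (i + 2)} {b : X (i + 1)} {c : X i},
    (a, b) ∈ M (i + 1) → (b, c) ∉ M i
  isUnit : ∀ {i : ℕ} {c : X (i + 1)} {c' : X i}, (c, c') ∈ M i → IsUnit (d i c c')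
  acyclic : ∀ v, ¬ Relation.TransGen (MStep X d M) v v

theorem IsAcyclicMatching.isAcyclicUnitMatching (hM : IsAcyclicMatching X d M) :
    IsAcyclicUnitMatching X d M where
  bottom_unique := hM.2.1 _ _ _ _
  top_unique := hM.2.2.1 _ _ _ _
  not_consecutive := hM.2.2.2.1 _ _ _ _
  isUnit h := (hM.2.2.2.2.1 _ _ _ h).2
  acyclic := hM.2.2.2.2.2

theorem IsAcyclicUnitMatching.isMatching (hM : IsAcyclicUnitMatching X d M) :
    IsMatching (IsMatched M) where
  rightUnique := by
    rintro _ _ _ ⟨h₁⟩ ⟨h₂⟩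
    rw [hM.bottom_unique h₁ h₂]
  leftUnique := by
    rintro _ _ _ ⟨h₁⟩ ⟨h₂⟩
    rw [hM.top_unique h₁ h₂]
  not_consecutive := by
    rintro _ _ _ ⟨h₁⟩ ⟨h₂⟩
    exact hM.not_consecutive h₁ h₂

/-- The height of a cell: a matched pair of cells sits at the degree of its bottom cell. Unlike the
degree it never increases along `G_M`. -/
def height (M : ∀ i, Set (X (i + 1) × X i)) (v : Σ i, X i) : ℕ :=
  if ∃ w, IsMatched M v w then v.1 - 1 else v.1

theorem height_le_degree (v : Σ i, X i) : height M v ≤ v.1 := by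
  unfold height
  split_ifs <;> lia

theorem degree_le_height_add_one (v : Σ i, X i) : v.1 ≤ height M v + 1 := by
  unfold height
  split_ifs <;> lia

theorem IsAcyclicUnitMatching.height_le_of_mstep (hM : IsAcyclicUnitMatching X d M)
    {v w : Σ i, X i} (h : MStep X d M v w) : height M w ≤ height M v := by
  cases h with
  | down i c c' =>
    exact (height_le_degree _).trans
      (Nat.le_of_succ_le_succ (degree_le_height_add_one (M := M) ⟨i + 1, c⟩))
  | up i c c' hmem =>
    have top : ∃ w, IsMatched M ⟨i + 1, c⟩ w := ⟨_, .mk hmem⟩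
    have bottom : ¬ ∃ w, IsMatched M ⟨i, c'⟩ w :=
      fun ⟨_, hw⟩ => hM.isMatching.not_consecutive (.mk hmem) hw
    simp only [height, if_pos top, if_neg bottom, Nat.add_sub_cancel, le_refl]

theorem IsAcyclicUnitMatching.degree_le_of_mpath (hM : IsAcyclicUnitMatching X d M)
    {v w : Σ i, X i} (p : MPath X d M v w) : w.1 ≤ v.1 + 1 := by
  have height_le : height M w ≤ height M v := by
    induction p with
    | nil => rfl
    | down i c c' hne hnm _ _ ih => exact ih.trans (hM.height_le_of_mstep (.down i c c' hne hnm))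
    | up i c c' hmem _ _ ih => exact ih.trans (hM.height_le_of_mstep (.up i c c' hmem))
  exact (degree_le_height_add_one w).trans (Nat.succ_le_succ (height_le.trans (height_le_degree v)))

theorem finite_setOf_degree_le [∀ i, Finite (X i)] (n : ℕ) :
    {v : Σ i, X i | v.1 ≤ n}.Finite := by
  refine ((Set.finite_Iic n).biUnion fun i _ => Set.finite_range (Sigma.mk i : X i → _)).subset ?_
  rintro ⟨i, c⟩ hi
  exact Set.mem_biUnion hi ⟨c, rfl⟩

theorem IsAcyclicUnitMatching.acc [∀ i, Finite (X i)] (hM : IsAcyclicUnitMatching X d M)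
    (v : Σ i, X i) : Acc (flip (MStep X d M)) v := by
  refine acc_of_finite_of_acyclic (fun u => ?_) ?_
  · exact fun h => hM.acyclic u (Relation.transGen_swap.1 h)
  · refine (finite_setOf_degree_le (height M v + 1)).subset fun u hu => ?_
    have height_le : height M u ≤ height M v := by
      induction hu using Relation.ReflTransGen.head_induction_on with
      | refl => rfl
      | head step _ ih => exact (hM.height_le_of_mstep step).trans ih
    exact (degree_le_height_add_one u).trans (Nat.succ_le_succ height_le)

/-- A path is either trivial or consists of a first step and a path from its endpoint. -/
def MPath.firstStep : ∀ {v w : Σ i, X i}, MPath X d M v w →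
    PLift (v = w) ⊕ Σ u : {u // MStep X d M v u}, MPath X d M u w
  | _, _, .nil _ => .inl ⟨rfl⟩
  | _, _, .down i c c' hne hnm _ p => .inr ⟨⟨_, .down i c c' hne hnm⟩, p⟩
  | _, _, .up i c c' hmem _ p => .inr ⟨⟨_, .up i c c' hmem⟩, p⟩

theorem MPath.firstStep_bijective (v w : Σ i, X i) :
    Function.Bijective (MPath.firstStep : MPath X d M v w → _) := by
  constructor
  · intro p q h
    cases p <;> cases q <;> simp_all [MPath.firstStep] <;> lia
  · rintro (⟨⟨rfl⟩⟩ | ⟨⟨_, _ | _⟩, p⟩)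
    exacts [⟨.nil _, rfl⟩, ⟨.down _ _ _ ‹_› ‹_› _ p, rfl⟩, ⟨.up _ _ _ ‹_› _ p, rfl⟩]

theorem finite_setOf_mstep [∀ i, Finite (X i)] (v : Σ i, X i) :
    {u | MStep X d M v u}.Finite := by
  refine (finite_setOf_degree_le (v.1 + 1)).subset ?_
  rintro _ (_ | _) <;> simp only [Set.mem_ofPred_eq] <;> lia

theorem IsAcyclicUnitMatching.finite_mpath [∀ i, Finite (X i)] (hM : IsAcyclicUnitMatching X d M)
    (v w : Σ i, X i) : Finite (MPath X d M v w) := by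
  induction hM.acc v with
  | intro v _ ih =>
    have : Finite {u // MStep X d M v u} := finite_setOf_mstep v
    have : ∀ u : {u // MStep X d M v u}, Finite (MPath X d M u w) := fun u => ih u u.2
    exact Finite.of_injective _ (MPath.firstStep_bijective v w).injective

end Cells

section Operators

variable {X d M}

/-- The homological degree of a cell, as an integer so that degrees can be subtracted. -/
abbrev cellDegree (v : Σ i, X i) : ℤ := v.1

/-- The differential of `C` as an operator on the free module on all cells. -/
def totalDifferential (d : ∀ i, X (i + 1) → X i → R) : Module.End R ((Σ i, X i) →₀ R) :=
  Finsupp.linearCombination R fun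
    | ⟨0, _⟩ => 0
    | ⟨i + 1, c⟩ => ∑ c', Finsupp.single ⟨i, c'⟩ (d i c c')

theorem totalDifferential_single_zero (c : X 0) (r : R) :
    totalDifferential d (Finsupp.single ⟨0, c⟩ r) = 0 := by
  simp [totalDifferential]

theorem totalDifferential_single_succ {i : ℕ} (c : X (i + 1)) (r : R) :
    totalDifferential d (Finsupp.single ⟨i + 1, c⟩ r) =
      ∑ c', Finsupp.single ⟨i, c'⟩ (r * d i c c') := by
  simp [totalDifferential, Finset.smul_sum]

theorem totalDifferential_single_apply {i : ℕ} (c : X (i + 1)) (c' : X i) :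
    totalDifferential d (Finsupp.single ⟨i + 1, c⟩ 1) ⟨i, c'⟩ = d i c c' := by
  rw [totalDifferential_single_succ, Finsupp.finsetSum_apply, Finset.sum_eq_single c', one_mul]
  · exact Finsupp.single_eq_same
  · exact fun b _ hb => Finsupp.single_eq_of_ne' fun h => hb (sigma_mk_injective h)
  · exact fun h => absurd (Finset.mem_univ c') h

theorem isHomogeneousOfDegree_totalDifferential :
    IsHomogeneousOfDegree cellDegree (-1) (totalDifferential d) := by
  rintro ⟨_ | i, c⟩ w hw
  · rw [totalDifferential_single_zero, Finsupp.zero_apply]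
  · rw [totalDifferential_single_succ, Finsupp.finsetSum_apply]
    refine Finset.sum_eq_zero fun b _ => Finsupp.single_eq_of_ne' ?_
    rintro rfl
    exact hw (by simp [cellDegree])

theorem IsComplexAux.totalDifferential_mul_self (hC : IsComplexAux X d) :
    totalDifferential d * totalDifferential d = 0 := by
  refine finsuppEnd_ext ?_
  rintro ⟨_ | _ | i, c⟩ w
  · simp [totalDifferential_single_zero]
  · simp [totalDifferential_single_succ, totalDifferential_single_zero]
  · simp only [Module.End.mul_apply, totalDifferential_single_succ, map_sum, one_mul]
    rw [Finset.sum_comm]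
    simp only [← Finsupp.single_finsetSum, hC i c, Finsupp.single_zero, Finset.sum_const_zero,
      LinearMap.zero_apply]

/-- The part of the differential along the edges of `M`. -/
def matchedPart (d : ∀ i, X (i + 1) → X i → R) (M : ∀ i, Set (X (i + 1) × X i)) :
    Module.End R ((Σ i, X i) →₀ R) :=
  matchingOperator (IsMatched M) fun t b => totalDifferential d (Finsupp.single t 1) b

/-- The operator along the reversed edges of `M`, with the inverse weights. -/
def matchedInverse (d : ∀ i, X (i + 1) → X i → R) (M : ∀ i, Set (X (i + 1) × X i)) :
    Module.End R ((Σ i, X i) →₀ R) :=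
  matchingOperator (flip (IsMatched M)) fun b t =>
    Ring.inverse (totalDifferential d (Finsupp.single t 1) b)

/-- The operator whose matrix coefficients are the edge weights of `G_M`. -/
def transfer (d : ∀ i, X (i + 1) → X i → R) (M : ∀ i, Set (X (i + 1) × X i)) :
    Module.End R ((Σ i, X i) →₀ R) :=
  totalDifferential d - matchedPart d M - matchedInverse d M

/-- The operator `v ↦ ∑ Γ(v,w) • w`. The cutoff of `w` by degree makes the sum finite and discards
no paths when the matching is acyclic. -/
def pathSum (d : ∀ i, X (i + 1) → X i → R) (M : ∀ i, Set (X (i + 1) × X i)) :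
    Module.End R ((Σ i, X i) →₀ R) :=
  Finsupp.linearCombination R fun v =>
    Finsupp.indicator ((Finset.range (v.1 + 2)).sigma fun _ => Finset.univ) fun w _ =>
      Gamma X d M v w

namespace IsAcyclicUnitMatching

variable (hM : IsAcyclicUnitMatching X d M)
include hM

theorem isUnit_totalDifferential {v w : Σ i, X i} (h : IsMatched M v w) :
    IsUnit (totalDifferential d (Finsupp.single v 1) w) := by
  obtain ⟨h⟩ := h
  rw [totalDifferential_single_apply]
  exact hM.isUnit h

theorem isMatchingPair : IsMatchingPair (matchedPart d M) (matchedInverse d M) :=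
  hM.isMatching.isMatchingPair
    (fun _ _ h => Ring.mul_inverse_cancel _ (hM.isUnit_totalDifferential h))
    (fun _ _ h => Ring.inverse_mul_cancel _ (hM.isUnit_totalDifferential h))

theorem criticalIdempotent_single (v : Σ i, X i) (r : R) :
    criticalIdempotent (matchedPart d M) (matchedInverse d M) (Finsupp.single v r) =
      if CriticalV X M v then Finsupp.single v r else 0 := by
  simp only [criticalV_iff_isUnmatched]
  exact hM.isMatching.criticalIdempotent_single
    (fun _ _ h => Ring.mul_inverse_cancel _ (hM.isUnit_totalDifferential h))
    (fun _ _ h => Ring.inverse_mul_cancel _ (hM.isUnit_totalDifferential h)) r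

theorem matchedPart_single_apply (v w : Σ i, X i) :
    matchedPart d M (Finsupp.single v 1) w =
      if IsMatched M v w then totalDifferential d (Finsupp.single v 1) w else 0 :=
  matchingOperator_single_apply hM.isMatching.rightUnique

theorem matchedInverse_single_apply (v w : Σ i, X i) :
    matchedInverse d M (Finsupp.single v 1) w =
      if IsMatched M w v then Ring.inverse (totalDifferential d (Finsupp.single w 1) v) else 0 :=
  matchingOperator_single_apply hM.isMatching.flip.rightUnique

theorem isHomogeneousOfDegree_unmatchedPart :
    IsHomogeneousOfDegree cellDegree (-1) (totalDifferential d - matchedPart d M) := by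
  intro v w hw
  simp [hM.matchedPart_single_apply, isHomogeneousOfDegree_totalDifferential v w hw]

theorem isHomogeneousOfDegree_matchedInverse :
    IsHomogeneousOfDegree cellDegree 1 (matchedInverse d M) := by
  intro v w hw
  rw [hM.matchedInverse_single_apply, if_neg]
  intro h
  have := h.degree_eq
  lia

theorem transfer_single_of_down {i : ℕ} {c : X (i + 1)} {c' : X i} (h : (c, c') ∉ M i) :
    transfer d M (Finsupp.single ⟨i + 1, c⟩ 1) ⟨i, c'⟩ = d i c c' := by
  simp only [transfer, LinearMap.sub_apply, Finsupp.sub_apply, hM.matchedPart_single_apply,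
    hM.matchedInverse_single_apply, isMatched_mk_iff, if_neg h, totalDifferential_single_apply]
  rw [if_neg fun h' => by have := h'.degree_eq; lia, sub_zero, sub_zero]

theorem transfer_single_of_up {i : ℕ} {c : X (i + 1)} {c' : X i} (h : (c, c') ∈ M i) :
    transfer d M (Finsupp.single ⟨i, c'⟩ 1) ⟨i + 1, c⟩ = -Ring.inverse (d i c c') := by
  rw [transfer, LinearMap.sub_apply, Finsupp.sub_apply,
    hM.isHomogeneousOfDegree_unmatchedPart _ _ (by lia), hM.matchedInverse_single_apply,
    if_pos (isMatched_mk_iff.2 h), totalDifferential_single_apply, zero_sub]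

theorem mstep_of_transfer_single_apply_ne_zero {v w : Σ i, X i}
    (h : transfer d M (Finsupp.single v 1) w ≠ 0) : MStep X d M v w := by
  by_cases reversed : IsMatched M w v
  · obtain ⟨hmem⟩ := reversed
    exact .up _ _ _ hmem
  rw [transfer, LinearMap.sub_apply, Finsupp.sub_apply, hM.matchedInverse_single_apply,
    if_neg reversed, sub_zero] at h
  have degree_eq : w.1 + 1 = v.1 := by
    have := not_imp_comm.1 (hM.isHomogeneousOfDegree_unmatchedPart v w) h
    lia
  obtain ⟨_, c⟩ := v
  obtain ⟨i, c'⟩ := w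
  obtain rfl : i + 1 = _ := degree_eq
  rw [LinearMap.sub_apply, Finsupp.sub_apply, hM.matchedPart_single_apply, isMatched_mk_iff,
    totalDifferential_single_apply] at h
  refine .down i c c' ?_ ?_ <;> intro hc <;> simp [hc] at h

theorem weight_eq_firstStep {v w : Σ i, X i} (p : MPath X d M v w) :
    p.weight = p.firstStep.elim (fun _ => 1)
      fun q => transfer d M (Finsupp.single v 1) q.1 * q.2.weight := by
  cases p with
  | nil => rfl
  | down i c c' _ hnm => exact congrArg (· * _) (hM.transfer_single_of_down hnm).symm
  | up i c c' hmem => exact congrArg (· * _) (hM.transfer_single_of_up hmem).symm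

theorem Gamma_eq_firstStep (v w : Σ i, X i) :
    Gamma X d M v w = (if v = w then 1 else 0) +
      (transfer d M (Finsupp.single v 1)).sum fun u r => r * Gamma X d M u w := by
  have (u : Σ i, X i) : Fintype (MPath X d M u w) :=
    @Fintype.ofFinite _ (hM.finite_mpath u w)
  have : Fintype {u // MStep X d M v u} := (finite_setOf_mstep v).fintype
  have support_subset : (transfer d M (Finsupp.single v 1)).support ⊆
      Finset.univ.map (Function.Embedding.subtype (MStep X d M v)) := by
    intro u hu
    simpa using hM.mstep_of_transfer_single_apply_ne_zero (Finsupp.mem_support_iff.1 hu)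
  rw [Finsupp.sum_of_support_subset _ support_subset _ (by simp), Finset.sum_map]
  simp only [Gamma, finsum_eq_sum_of_fintype, Finset.mul_sum]
  rw [← Fintype.sum_sigma', Fintype.sum_equiv (Equiv.ofBijective _ (MPath.firstStep_bijective v w))
    _ _ hM.weight_eq_firstStep, Fintype.sum_sum_type]
  congr 1
  by_cases hvw : v = w <;> simp [hvw]

theorem pathSum_single_apply (v w : Σ i, X i) :
    pathSum d M (Finsupp.single v 1) w = Gamma X d M v w := by
  rw [pathSum, Finsupp.linearCombination_single, one_smul, Finsupp.indicator_apply]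
  split_ifs with hw
  · rfl
  · have : IsEmpty (MPath X d M v w) := by
      refine ⟨fun p => hw ?_⟩
      have := hM.degree_le_of_mpath p
      simp only [Finset.mem_sigma, Finset.mem_range, Finset.mem_univ, and_true]
      lia
    exact (finsum_of_isEmpty _).symm

theorem pathSum_eq_first_step : pathSum d M = 1 + pathSum d M * transfer d M := by
  refine finsuppEnd_ext fun v w => ?_
  rw [hM.pathSum_single_apply, hM.Gamma_eq_firstStep, LinearMap.add_apply, Finsupp.add_apply,
    mul_apply_single_apply, Module.End.one_apply, Finsupp.single_apply]
  simp only [hM.pathSum_single_apply]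

theorem one_sub_transfer_surjective :
    Function.Surjective (1 - transfer d M : Module.End R ((Σ i, X i) →₀ R)) := by
  rw [← LinearMap.range_eq_top, eq_top_iff, ← Finsupp.basisSingleOne.span_eq, Submodule.span_le]
  rintro _ ⟨v, rfl⟩
  rw [Finsupp.coe_basisSingleOne, SetLike.mem_coe]
  induction hM.acc v with
  | intro v _ ih =>
    have transfer_mem : transfer d M (Finsupp.single v 1) ∈ LinearMap.range (1 - transfer d M) := by
      rw [← Finsupp.sum_single (transfer d M (Finsupp.single v 1))]
      refine Submodule.sum_mem _ fun u hu => ?_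
      rw [← Finsupp.smul_single_one]
      exact Submodule.smul_mem _ _
        (ih u (hM.mstep_of_transfer_single_apply_ne_zero (Finsupp.mem_support_iff.1 hu)))
    convert Submodule.add_mem _ (LinearMap.mem_range_self (1 - transfer d M) (Finsupp.single v 1))
      transfer_mem
    simp

theorem pathSum_eq_last_step : pathSum d M = 1 + transfer d M * pathSum d M := by
  have left_inv : pathSum d M * (1 - transfer d M) = 1 := by
    rw [mul_sub (pathSum d M) 1, mul_one, sub_eq_iff_eq_add]
    exact hM.pathSum_eq_first_step
  have right_inv : (1 - transfer d M) * pathSum d M = 1 :=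
    LinearMap.ext <| Function.LeftInverse.rightInverse_of_surjective (f := pathSum d M)
      (LinearMap.congr_fun left_inv) hM.one_sub_transfer_surjective
  rwa [sub_mul 1 (transfer d M), one_mul, sub_eq_iff_eq_add] at right_inv

theorem isPathSum :
    IsPathSum (totalDifferential d) (matchedPart d M) (matchedInverse d M) fun k =>
      homogeneousPart cellDegree k (pathSum d M) where
  toIsMatchingPair := hM.isMatchingPair
  first_step k := by
    nth_rw 1 [hM.pathSum_eq_first_step]
    rw [transfer, mul_sub (pathSum d M) (_ - _), map_add, map_sub, homogeneousPart_one,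
      hM.isHomogeneousOfDegree_unmatchedPart.homogeneousPart_mul_right,
      hM.isHomogeneousOfDegree_matchedInverse.homogeneousPart_mul_right, sub_neg_eq_add]
    exact (add_sub_assoc _ _ _).symm
  last_step k := by
    nth_rw 1 [hM.pathSum_eq_last_step]
    rw [transfer, sub_mul (_ - _) _ (pathSum d M), map_add, map_sub, homogeneousPart_one,
      hM.isHomogeneousOfDegree_unmatchedPart.homogeneousPart_mul_left,
      hM.isHomogeneousOfDegree_matchedInverse.homogeneousPart_mul_left, sub_neg_eq_add]
    exact (add_sub_assoc _ _ _).symm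
  gamma_two := by
    refine finsuppEnd_ext fun v w => ?_
    rw [homogeneousPart_single_apply, hM.pathSum_single_apply, LinearMap.zero_apply,
      Finsupp.zero_apply, ite_eq_right_iff]
    intro hw
    have : IsEmpty (MPath X d M v w) := by
      refine ⟨fun p => ?_⟩
      have := hM.degree_le_of_mpath p
      lia
    exact finsum_of_isEmpty _

end IsAcyclicUnitMatching

end Operators

section BasisEmbedding

variable {S V α : Type*} [Ring S] [Fintype α] {ι : α → V}

/-- The linear extension to `α → S` of a map from the basis `α` to the basis `V`. -/
def basisEmbedding (S : Type*) [Ring S] (ι : α → V) : (α → S) →ₗ[S] (V →₀ S) :=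
  Fintype.linearCombination S fun a => Finsupp.single (ι a) 1

theorem basisEmbedding_apply (x : α → S) :
    basisEmbedding S ι x = ∑ a, Finsupp.single (ι a) (x a) := by
  simp [basisEmbedding, Fintype.linearCombination_apply]

theorem basisEmbedding_apply_image (hι : ι.Injective) (x : α → S) (a : α) :
    basisEmbedding S ι x (ι a) = x a := by
  rw [basisEmbedding_apply, Finsupp.finsetSum_apply, Finset.sum_eq_single a]
  · exact Finsupp.single_eq_same
  · exact fun b _ hb => Finsupp.single_eq_of_ne' (hι.ne hb)
  · exact fun h => absurd (Finset.mem_univ a) h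

theorem basisEmbedding_apply_of_notMem_range (x : α → S) {v : V} (hv : v ∉ Set.range ι) :
    basisEmbedding S ι x v = 0 := by
  rw [basisEmbedding_apply, Finsupp.finsetSum_apply]
  exact Finset.sum_eq_zero fun a _ => Finsupp.single_eq_of_ne' fun h => hv ⟨a, h⟩

theorem basisEmbedding_injective (hι : ι.Injective) : Function.Injective (basisEmbedding S ι) := by
  intro x y hxy
  ext a
  rw [← basisEmbedding_apply_image hι x, hxy, basisEmbedding_apply_image hι]

theorem map_basisEmbedding_apply (F : Module.End S (V →₀ S)) (x : α → S) (v : V) :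
    F (basisEmbedding S ι x) v = ∑ a, x a * F (Finsupp.single (ι a) 1) v := by
  simp only [basisEmbedding, Fintype.linearCombination_apply, map_sum, map_smul,
    Finsupp.finsetSum_apply, Finsupp.smul_apply, smul_eq_mul]

theorem basisEmbedding_liftMap {T α β : Type} [Ring T] [Fintype α] [Fintype β] {ι : α → V}
    {κ : β → V} {w : α → β → T} {F : Module.End T (V →₀ T)} (hκ : κ.Injective)
    (h_coeff : ∀ a b, F (Finsupp.single (ι a) 1) (κ b) = w a b)
    (h_range : ∀ a v, v ∉ Set.range κ → F (Finsupp.single (ι a) 1) v = 0) (x : α → T) :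
    basisEmbedding T κ (liftMap w x) = F (basisEmbedding T ι x) := by
  ext v
  rw [map_basisEmbedding_apply]
  by_cases hv : v ∈ Set.range κ
  · obtain ⟨b, rfl⟩ := hv
    simp only [basisEmbedding_apply_image hκ, h_coeff]
    rfl
  · simp only [basisEmbedding_apply_of_notMem_range _ hv, h_range _ v hv, mul_zero,
      Finset.sum_const_zero]

end BasisEmbedding

section MorseComplex

variable {X d M}

/-- The component of the path sum raising the degree by `k`. -/
abbrev pathSumPart (d : ∀ i, X (i + 1) → X i → R) (M : ∀ i, Set (X (i + 1) × X i)) (k : ℤ) :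
    Module.End R ((Σ i, X i) →₀ R) :=
  homogeneousPart cellDegree k (pathSum d M)

/-- The projection onto the critical cells. -/
abbrev criticalProjection (d : ∀ i, X (i + 1) → X i → R) (M : ∀ i, Set (X (i + 1) × X i)) :
    Module.End R ((Σ i, X i) →₀ R) :=
  criticalIdempotent (matchedPart d M) (matchedInverse d M)

/-- The inclusion of `C i` into the free module on all cells. -/
abbrev chainInclusion (R : Type) [Ring R] (X : ℕ → Type) [∀ i, Fintype (X i)] (i : ℕ) :
    (X i → R) →ₗ[R] ((Σ i, X i) →₀ R) :=
  basisEmbedding R (Sigma.mk i)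

/-- The inclusion of the degree `i` part of the Morse complex into the free module on all cells. -/
abbrev morseInclusion (R : Type) [Ring R] (M : ∀ i, Set (X (i + 1) × X i)) (i : ℕ) :
    (Crit X M i → R) →ₗ[R] ((Σ i, X i) →₀ R) :=
  basisEmbedding R fun c => ⟨i, c.1⟩

omit [∀ i, Fintype (X i)] in
theorem criticalCell_injective (i : ℕ) :
    Function.Injective fun c : Crit X M i => (⟨i, c.1⟩ : Σ i, X i) :=
  sigma_mk_injective.comp Subtype.val_injective

omit [∀ i, Fintype (X i)] in
theorem mem_range_mk_iff {i : ℕ} {v : Σ i, X i} :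
    v ∈ Set.range (Sigma.mk i) ↔ v.1 = i := by
  constructor
  · rintro ⟨c, rfl⟩
    rfl
  · rintro rfl
    exact ⟨v.2, rfl⟩

omit [∀ i, Fintype (X i)] in
theorem mem_range_criticalCell_iff {i : ℕ} {v : Σ i, X i} :
    v ∈ Set.range (fun c : Crit X M i => (⟨i, c.1⟩ : Σ i, X i)) ↔ v.1 = i ∧ CriticalV X M v := by
  constructor
  · rintro ⟨c, rfl⟩
    exact ⟨rfl, c.2⟩
  · rintro ⟨rfl, hv⟩
    exact ⟨⟨v.2, hv⟩, rfl⟩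

theorem chainInclusion_Dmap (i : ℕ) (x : X (i + 1) → R) :
    chainInclusion R X i (Dmap X d i x) = totalDifferential d (chainInclusion R X (i + 1) x) := by
  refine basisEmbedding_liftMap sigma_mk_injective (fun _ _ => totalDifferential_single_apply _ _)
    (fun c v hv => isHomogeneousOfDegree_totalDifferential _ _ fun h => hv ?_) x
  rw [mem_range_mk_iff]
  lia

theorem totalDifferential_chainInclusion_zero (x : X 0 → R) :
    totalDifferential d (chainInclusion R X 0 x) = 0 := by
  simp only [basisEmbedding_apply, map_sum, totalDifferential_single_zero, Finset.sum_const_zero]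

namespace IsAcyclicUnitMatching

variable (hM : IsAcyclicUnitMatching X d M)
include hM

theorem criticalProjection_mul_single_apply (A : Module.End R ((Σ i, X i) →₀ R)) (v w : Σ i, X i) :
    (criticalProjection d M * A) (Finsupp.single v 1) w =
      if CriticalV X M w then A (Finsupp.single v 1) w else 0 := by
  rw [Module.End.mul_apply]
  generalize A (Finsupp.single v 1) = x
  induction x using Finsupp.induction_linear with
  | zero => simp
  | add x y hx hy =>
    rw [map_add, Finsupp.add_apply, hx, hy, Finsupp.add_apply]
    split_ifs <;> simp
  | single u r =>
    rw [hM.criticalIdempotent_single]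
    by_cases huw : u = w
    · subst huw
      split_ifs <;> simp
    · split_ifs <;> simp [huw]

theorem mul_criticalProjection_single_apply (A : Module.End R ((Σ i, X i) →₀ R)) (v w : Σ i, X i) :
    (A * criticalProjection d M) (Finsupp.single v 1) w =
      if CriticalV X M v then A (Finsupp.single v 1) w else 0 := by
  rw [Module.End.mul_apply, hM.criticalIdempotent_single]
  split_ifs <;> simp

theorem criticalProjection_morseInclusion (i : ℕ) (x : Crit X M i → R) :
    criticalProjection d M (morseInclusion R M i x) = morseInclusion R M i x := by
  simp only [basisEmbedding_apply, map_sum, hM.criticalIdempotent_single]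
  exact Finset.sum_congr rfl fun c _ => if_pos c.2

theorem pathSumPart_single_apply (k : ℤ) (v w : Σ i, X i) :
    pathSumPart d M k (Finsupp.single v 1) w =
      if cellDegree w = cellDegree v + k then Gamma X d M v w else 0 := by
  rw [homogeneousPart_single_apply, hM.pathSum_single_apply]

theorem chainInclusion_chimap (i : ℕ) (x : X i → R) :
    chainInclusion R X (i + 1) (chimap X d M i x) =
      pathSumPart d M 1 (chainInclusion R X i x) := by
  refine basisEmbedding_liftMap sigma_mk_injective (fun c c' => ?_) (fun c v hv => ?_) x
  · rw [hM.pathSumPart_single_apply, if_pos (by lia)]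
  · rw [hM.pathSumPart_single_apply, if_neg]
    rw [mem_range_mk_iff] at hv
    lia

theorem morseInclusion_fmap (i : ℕ) (x : X i → R) :
    morseInclusion R M i (fmap X d M i x) =
      (criticalProjection d M * pathSumPart d M 0) (chainInclusion R X i x) := by
  refine basisEmbedding_liftMap (criticalCell_injective i) (fun c c' => ?_) (fun c v hv => ?_) x
  · rw [hM.criticalProjection_mul_single_apply, if_pos c'.2, hM.pathSumPart_single_apply,
      if_pos (by simp)]
  · rw [hM.criticalProjection_mul_single_apply, hM.pathSumPart_single_apply, ← ite_and, if_neg]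
    rw [mem_range_criticalCell_iff] at hv
    lia

theorem chainInclusion_gmap (i : ℕ) (x : Crit X M i → R) :
    chainInclusion R X i (gmap X d M i x) =
      (pathSumPart d M 0 * criticalProjection d M) (morseInclusion R M i x) := by
  refine basisEmbedding_liftMap sigma_mk_injective (fun c c' => ?_) (fun c v hv => ?_) x
  · rw [hM.mul_criticalProjection_single_apply, if_pos c.2, hM.pathSumPart_single_apply,
      if_pos (by simp)]
  · rw [hM.mul_criticalProjection_single_apply, hM.pathSumPart_single_apply, ← ite_and, if_neg]
    rw [mem_range_mk_iff] at hv
    lia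

theorem morseInclusion_DMmap (i : ℕ) (x : Crit X M (i + 1) → R) :
    morseInclusion R M i (DMmap X d M i x) =
      (criticalProjection d M * pathSumPart d M (-1) * criticalProjection d M)
        (morseInclusion R M (i + 1) x) := by
  refine basisEmbedding_liftMap (criticalCell_injective i) (fun c c' => ?_) (fun c v hv => ?_) x
  · rw [hM.mul_criticalProjection_single_apply, if_pos c.2,
      hM.criticalProjection_mul_single_apply, if_pos c'.2, hM.pathSumPart_single_apply,
      if_pos (by lia)]
  · rw [hM.mul_criticalProjection_single_apply, if_pos c.2,
      hM.criticalProjection_mul_single_apply, hM.pathSumPart_single_apply, ← ite_and, if_neg]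
    rw [mem_range_criticalCell_iff] at hv
    lia

theorem fmap_comp_gmap (i : ℕ) : fmap X d M i ∘ₗ gmap X d M i = LinearMap.id := by
  refine LinearMap.ext fun x => basisEmbedding_injective (criticalCell_injective i) ?_
  simp only [LinearMap.comp_apply, hM.morseInclusion_fmap, hM.chainInclusion_gmap]
  rw [← Module.End.mul_apply, hM.isPathSum.projection_mul_inclusion,
    hM.criticalProjection_morseInclusion, LinearMap.id_apply]

variable (hC : IsComplexAux X d)
include hC

theorem DMmap_comp_DMmap (i : ℕ) : DMmap X d M i ∘ₗ DMmap X d M (i + 1) = 0 := by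
  refine LinearMap.ext fun x => basisEmbedding_injective (criticalCell_injective i) ?_
  simp only [LinearMap.comp_apply, hM.morseInclusion_DMmap]
  rw [← Module.End.mul_apply, hM.isPathSum.morse_mul_morse hC.totalDifferential_mul_self,
    LinearMap.zero_apply, LinearMap.zero_apply, map_zero]

theorem DMmap_comp_fmap (i : ℕ) :
    DMmap X d M i ∘ₗ fmap X d M (i + 1) = fmap X d M i ∘ₗ Dmap X d i := by
  refine LinearMap.ext fun x => basisEmbedding_injective (criticalCell_injective i) ?_
  simp only [LinearMap.comp_apply, hM.morseInclusion_DMmap, hM.morseInclusion_fmap,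
    chainInclusion_Dmap]
  rw [← Module.End.mul_apply, hM.isPathSum.morse_mul_projection hC.totalDifferential_mul_self,
    Module.End.mul_apply _ (totalDifferential d)]

theorem Dmap_comp_gmap (i : ℕ) :
    Dmap X d i ∘ₗ gmap X d M (i + 1) = gmap X d M i ∘ₗ DMmap X d M i := by
  refine LinearMap.ext fun x => basisEmbedding_injective sigma_mk_injective ?_
  simp only [LinearMap.comp_apply, hM.morseInclusion_DMmap, hM.chainInclusion_gmap,
    chainInclusion_Dmap]
  rw [← Module.End.mul_apply, hM.isPathSum.differential_mul_inclusion hC.totalDifferential_mul_self,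
    Module.End.mul_apply]

theorem chainInclusion_gmap_fmap (i : ℕ) (x : X i → R) :
    chainInclusion R X i (gmap X d M i (fmap X d M i x)) =
      chainInclusion R X i x + (totalDifferential d (chainInclusion R X (i + 1) (chimap X d M i x))
        + pathSumPart d M 1 (totalDifferential d (chainInclusion R X i x))) := by
  rw [hM.chainInclusion_gmap, hM.morseInclusion_fmap, ← Module.End.mul_apply,
    hM.isPathSum.inclusion_mul_projection hC.totalDifferential_mul_self, hM.chainInclusion_chimap]
  rfl

theorem gmap_comp_fmap_zero_sub_id :
    gmap X d M 0 ∘ₗ fmap X d M 0 - LinearMap.id = Dmap X d 0 ∘ₗ chimap X d M 0 := by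
  refine LinearMap.ext fun x => basisEmbedding_injective sigma_mk_injective ?_
  rw [LinearMap.sub_apply, map_sub, LinearMap.comp_apply, hM.chainInclusion_gmap_fmap hC,
    totalDifferential_chainInclusion_zero, map_zero, add_zero, LinearMap.id_apply,
    add_sub_cancel_left, LinearMap.comp_apply, chainInclusion_Dmap]

theorem gmap_comp_fmap_succ_sub_id (i : ℕ) :
    gmap X d M (i + 1) ∘ₗ fmap X d M (i + 1) - LinearMap.id =
      Dmap X d (i + 1) ∘ₗ chimap X d M (i + 1) + chimap X d M i ∘ₗ Dmap X d i := by
  refine LinearMap.ext fun x => basisEmbedding_injective sigma_mk_injective ?_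
  rw [LinearMap.sub_apply, map_sub, LinearMap.comp_apply, hM.chainInclusion_gmap_fmap hC,
    LinearMap.id_apply, add_sub_cancel_left, LinearMap.add_apply, map_add, LinearMap.comp_apply,
    LinearMap.comp_apply, chainInclusion_Dmap, hM.chainInclusion_chimap i, chainInclusion_Dmap]

end IsAcyclicUnitMatching

end MorseComplex

theorem algebraic_discrete_morse_theory_general
    (hC : IsComplexAux X d) (hM : IsAcyclicUnitMatching X d M) :
    (∀ i, Module.Free R (Crit X M i → R)) ∧
    (∀ i, DMmap X d M i ∘ₗ DMmap X d M (i + 1) = 0) ∧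
    (∀ i, DMmap X d M i ∘ₗ fmap X d M (i + 1) = fmap X d M i ∘ₗ Dmap X d i) ∧
    (∀ i, Dmap X d i ∘ₗ gmap X d M (i + 1) = gmap X d M i ∘ₗ DMmap X d M i) ∧
    (∀ i, fmap X d M i ∘ₗ gmap X d M i = LinearMap.id) ∧
    (gmap X d M 0 ∘ₗ fmap X d M 0 - LinearMap.id = Dmap X d 0 ∘ₗ chimap X d M 0) ∧
    (∀ i, gmap X d M (i + 1) ∘ₗ fmap X d M (i + 1) - LinearMap.id =
        Dmap X d (i + 1) ∘ₗ chimap X d M (i + 1) + chimap X d M i ∘ₗ Dmap X d i) :=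
  ⟨fun _ => inferInstance, hM.DMmap_comp_DMmap hC, hM.DMmap_comp_fmap hC, hM.Dmap_comp_gmap hC,
    hM.fmap_comp_gmap, hM.gmap_comp_fmap_zero_sub_id hC, hM.gmap_comp_fmap_succ_sub_id hC⟩

/-- Theorem 2.2, Algebraic Discrete Morse theory.
If `M` is an acyclic matching on the graph `G(C)` of the chain complex `C`, then the
Morse complex `C^M` is a chain complex of free `R`-modules (`∂^M ∘ ∂^M = 0`) which is
chain homotopy equivalent to `C`: the maps `f` and `g` are chain maps, `f ∘ g` is the
identity of `C^M` and `g ∘ f` is homotopic to the identity of `C` via the homotopy `χ`.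
In particular `H_i(C) ≅ H_i(C^M)` for all `i ≥ 0`. -/
theorem algebraic_discrete_morse_theory
    (hC : IsComplexAux X d) (hM : IsAcyclicMatching X d M) :
    (∀ i, Module.Free R (Crit X M i → R)) ∧
    (∀ i, DMmap X d M i ∘ₗ DMmap X d M (i + 1) = 0) ∧
    (∀ i, DMmap X d M i ∘ₗ fmap X d M (i + 1) = fmap X d M i ∘ₗ Dmap X d i) ∧
    (∀ i, Dmap X d i ∘ₗ gmap X d M (i + 1) = gmap X d M i ∘ₗ DMmap X d M i) ∧
    (∀ i, fmap X d M i ∘ₗ gmap X d M i = LinearMap.id) ∧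
    (gmap X d M 0 ∘ₗ fmap X d M 0 - LinearMap.id = Dmap X d 0 ∘ₗ chimap X d M 0) ∧
    (∀ i, gmap X d M (i + 1) ∘ₗ fmap X d M (i + 1) - LinearMap.id =
        Dmap X d (i + 1) ∘ₗ chimap X d M (i + 1) + chimap X d M i ∘ₗ Dmap X d i) :=
  algebraic_discrete_morse_theory_general X d M hC hM.isAcyclicUnitMatching

end ADMT

end
end

section
/- Let M be an acyclic matching on the graph G(C•) of the chain complex C•. Then f ∘ g is the identity map of the Morse complex: f_i ∘ g_i = id on C_i^M for every i ≥ 0. -/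
/-!
Algebraic Discrete Morse theory (Jöllenbeck–Welker).

Setup: `R` is a (possibly noncommutative) ring and `C` is a chain complex of free
left `R`-modules `C i = X i → R` with fixed finite basis `X i` in homological
degree `i`; the differential is `∂ i (c) = ∑ c', d i c c' • c'` (we record only the
matrix of coefficients `d`).  `M` is a matching on the associated weighted directed
graph, `MStep` describes the edges of the modified graph `G_M`, `MPath` the directed
paths, `Gamma v w` the sum of the weights of all paths from `v` to `w`, `Crit` the
critical basis elements, `DMmap` the Morse differential, and `fmap`, `gmap`, `chimap`
the comparison maps and the homotopy.
-/

attribute [local instance] Classical.propDecidable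

noncomputable section

section ADMT

variable {R : Type} [Ring R]
variable (X : ℕ → Type) [∀ i, Fintype (X i)]
variable (d : ∀ i, X (i + 1) → X i → R)
variable (M : ∀ i, Set (X (i + 1) × X i))

/-!
No vertex is both the upper end and the lower end of a matched edge, so in a path in `G_M` every
upward step that is not the last one is followed by a downward step.  Hence a path gains degree only
if it ends with an upward step, that is, at an upper end.  A nonconstant path that leaves a vertex
which is not a lower end starts with a downward step, so it even loses degree unless it ends at an
upper end.  For `x`, `y` critical and `z ≠ y` of the same degree this gives `Γ(x, z) = 0` if `z` is
a lower end (and so neither `x` nor an upper end), and `Γ(z, y) = 0` otherwise.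
-/

/-- The upper ends `c` of the matched edges `(c, c')`, as a set of vertices of `G_M`. -/
def matchedTops : Set (Σ i, X i) :=
  {v | ∃ (j : ℕ) (a : X (j + 1)) (b : X j), (a, b) ∈ M j ∧ v = ⟨j + 1, a⟩}

/-- The lower ends `c'` of the matched edges `(c, c')`, as a set of vertices of `G_M`. -/
def matchedBottoms : Set (Σ i, X i) :=
  {v | ∃ (j : ℕ) (a : X (j + 1)) (b : X j), (a, b) ∈ M j ∧ v = ⟨j, b⟩}

section LiftMap

variable {α β γ : Type} [Fintype α]

theorem liftMap_comp_liftMap [Fintype β] (A : α → β → R) (B : β → γ → R) :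
    liftMap B ∘ₗ liftMap A = liftMap (Matrix.of A * Matrix.of B) :=
  LinearMap.ext fun v => Matrix.vecMul_vecMul v (Matrix.of A) (Matrix.of B)

theorem liftMap_one [DecidableEq α] : liftMap (1 : Matrix α α R) = LinearMap.id :=
  LinearMap.ext Matrix.vecMul_one

end LiftMap

section Paths

omit [∀ i, Fintype (X i)]

variable {X d M} {u v w : Σ i, X i}

theorem CriticalV.notMem_matchedTops (hv : CriticalV X M v) : v ∉ matchedTops X M :=
  fun ⟨j, a, b, hab, hva⟩ => (hv j a b hab).1 hva

theorem CriticalV.notMem_matchedBottoms (hv : CriticalV X M v) : v ∉ matchedBottoms X M :=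
  fun ⟨j, a, b, hab, hvb⟩ => (hv j a b hab).2 hvb

theorem IsAcyclicMatching.disjoint_matchedTops_matchedBottoms (hM : IsAcyclicMatching X d M) :
    Disjoint (matchedTops X M) (matchedBottoms X M) := by
  obtain ⟨-, -, -, no_chain, -, -⟩ := hM
  rw [Set.disjoint_left]
  rintro _ ⟨i, b, c, hbc, rfl⟩ ⟨_, a, _, hab, ⟨⟩⟩
  exact no_chain i a b c hab hbc

theorem MPath.degree_le (hM : Disjoint (matchedTops X M) (matchedBottoms X M)) :
    ∀ {v w}, MPath X d M v w → w ∉ matchedTops X M → w.1 ≤ v.1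
  | _, _, nil _, _ => le_rfl
  | _, _, down _ _ _ _ _ _ p, hw => (degree_le hM p hw).trans (Nat.le_succ _)
  | _, _, up i a b hab _ (nil _), hw => absurd ⟨i, a, b, hab, rfl⟩ hw
  | _, _, up _ _ _ _ _ (down _ _ _ _ _ _ p), hw => (degree_le hM p hw :)
  | _, _, up i a b hab _ (up _ a' _ hab' _ _), _ =>
    absurd ⟨_, a', a, hab', rfl⟩ (Set.disjoint_left.mp hM ⟨i, a, b, hab, rfl⟩)

theorem MPath.eq_nil (hM : Disjoint (matchedTops X M) (matchedBottoms X M))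
    (hvb : v ∉ matchedBottoms X M) (hvt : v ∉ matchedTops X M) (p : MPath X d M v v) :
    p = nil v := by
  cases p with
  | nil => rfl
  | down _ _ _ _ _ _ p => exact absurd (degree_le hM p hvt) (Nat.not_succ_le_self _)
  | up i a b hab => exact absurd ⟨i, a, b, hab, rfl⟩ hvb

theorem MPath.isEmpty_of_ne (hM : Disjoint (matchedTops X M) (matchedBottoms X M))
    (hv : v ∉ matchedBottoms X M) (hw : w ∉ matchedTops X M) (hdeg : v.1 ≤ w.1) (hne : v ≠ w) :
    IsEmpty (MPath X d M v w) where
  false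
    | nil _ => hne rfl
    | down _ _ _ _ _ _ p => Nat.not_succ_le_self _ (hdeg.trans (degree_le hM p hw))
    | up i a b hab _ _ => hv ⟨i, a, b, hab, rfl⟩

theorem Gamma_self (hM : Disjoint (matchedTops X M) (matchedBottoms X M))
    (hvb : v ∉ matchedBottoms X M) (hvt : v ∉ matchedTops X M) : Gamma X d M v v = 1 :=
  finsum_eq_single _ (MPath.nil v) fun p hp => absurd (p.eq_nil hM hvb hvt) hp

theorem Gamma_eq_zero_of_ne (hM : Disjoint (matchedTops X M) (matchedBottoms X M))
    (hv : v ∉ matchedBottoms X M) (hw : w ∉ matchedTops X M) (hdeg : v.1 ≤ w.1) (hne : v ≠ w) :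
    Gamma X d M v w = 0 :=
  have := MPath.isEmpty_of_ne (d := d) hM hv hw hdeg hne
  finsum_of_isEmpty _

theorem Gamma_mul_Gamma_eq_zero (hM : Disjoint (matchedTops X M) (matchedBottoms X M))
    (hv : v ∉ matchedBottoms X M) (hw : w ∉ matchedTops X M) (hvu : v.1 ≤ u.1) (huw : u.1 ≤ w.1)
    (hne : u ≠ w) : Gamma X d M v u * Gamma X d M u w = 0 := by
  by_cases hu : u ∈ matchedBottoms X M
  · have hu' : u ∉ matchedTops X M := Set.disjoint_right.mp hM hu
    have hvu_ne : v ≠ u := fun h => hv (h ▸ hu)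
    rw [Gamma_eq_zero_of_ne hM hv hu' hvu hvu_ne, zero_mul]
  · rw [Gamma_eq_zero_of_ne hM hu hw huw hne, mul_zero]

theorem Gamma_crit_crit {i : ℕ} (hM : Disjoint (matchedTops X M) (matchedBottoms X M))
    (x y : Crit X M i) : Gamma X d M ⟨i, x⟩ ⟨i, y⟩ = if x = y then 1 else 0 := by
  have hx := x.2.notMem_matchedBottoms
  split_ifs with hxy
  · subst hxy
    exact Gamma_self hM hx x.2.notMem_matchedTops
  · exact Gamma_eq_zero_of_ne hM hx y.2.notMem_matchedTops le_rfl
      (sigma_mk_injective.ne (Subtype.coe_ne_coe.mpr hxy))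

theorem sum_Gamma_mul_Gamma {i : ℕ} [Fintype (X i)]
    (hM : Disjoint (matchedTops X M) (matchedBottoms X M)) (x y : Crit X M i) :
    ∑ z : X i, Gamma X d M ⟨i, x⟩ ⟨i, z⟩ * Gamma X d M ⟨i, z⟩ ⟨i, y⟩ = if x = y then 1 else 0 := by
  have off_diagonal (z : X i) (hz : z ≠ y) :
      Gamma X d M ⟨i, x⟩ ⟨i, z⟩ * Gamma X d M ⟨i, z⟩ ⟨i, y⟩ = 0 :=
    Gamma_mul_Gamma_eq_zero hM x.2.notMem_matchedBottoms y.2.notMem_matchedTops le_rfl le_rfl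
      (sigma_mk_injective.ne hz)
  rw [Fintype.sum_eq_single y.1 off_diagonal, Gamma_crit_crit hM, Gamma_crit_crit hM, if_pos rfl,
    mul_one]

end Paths

theorem fmap_comp_gmap_eq_id_general (hM : Disjoint (matchedTops X M) (matchedBottoms X M))
    (i : ℕ) : fmap X d M i ∘ₗ gmap X d M i = LinearMap.id := by
  rw [fmap, gmap, liftMap_comp_liftMap, ← liftMap_one]
  congr 1
  ext x y
  simp only [Matrix.mul_apply, Matrix.of_apply, Matrix.one_apply, sum_Gamma_mul_Gamma hM]

/-- Lemma B.3 (H2).  If `M` is an acyclic matching on the graph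
`G(C)` of the chain complex `C`, then `f ∘ g` is the identity of the Morse complex:
`f_i ∘ g_i = id` on `C_i^M` for every `i ≥ 0`. -/
theorem fmap_comp_gmap_eq_id
    (hC : IsComplexAux X d) (hM : IsAcyclicMatching X d M) :
    ∀ i, fmap X d M i ∘ₗ gmap X d M i = LinearMap.id := by
  exact fmap_comp_gmap_eq_id_general X d M hM.disjoint_matchedTops_matchedBottoms

end ADMT

end
end
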